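/- arXiv:2101.10407 — 7 statements merged into one kernel-verified Lean document; each statement's English description precedes it below -/
import Mathlib

section
/- Let n ≥ 1, let P ⊆ EuclideanSpace ℝ (Fin n), x₀ ∈ P, and N ∈ EuclideanSpace ℝ (Fin n). Suppose there is an open neighborhood U of x₀ such that U ∩ {y | ⟪y - x₀, N⟫ ≤ 0} ⊆ P (i.e., near x₀ the set P contains the whole inner side of the hyperplane through x₀ with normal N). Let x : ℝ → EuclideanSpace ℝ (Fin n) have derivative v at t₀ with x t₀ = x₀. If the trajectory escapes P through x₀, i.e., for every ε > 0 there exists δ with 0 < δ < ε and x (t₀ + δ) ∉ P, then ⟪v, N⟫ ≥ 0. (Contrapositive form of the paper's Theorem 1: a point satisfying the invariance condition strictly admits no escaping trajectory.) -/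
open scoped RealInnerProductSpace

theorem stmt_1 (n : ℕ) (hn : 1 ≤ n)
    (P : Set (EuclideanSpace ℝ (Fin n)))
    (x₀ N : EuclideanSpace ℝ (Fin n))
    (hx₀ : x₀ ∈ P)
    (hloc : ∃ U : Set (EuclideanSpace ℝ (Fin n)), IsOpen U ∧ x₀ ∈ U ∧
      U ∩ {y | ⟪y - x₀, N⟫ ≤ 0} ⊆ P)
    (x : ℝ → EuclideanSpace ℝ (Fin n)) (v : EuclideanSpace ℝ (Fin n)) (t₀ : ℝ)
    (hx : HasDerivAt x v t₀) (hxt₀ : x t₀ = x₀)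
    (hesc : ∀ ε > 0, ∃ δ : ℝ, 0 < δ ∧ δ < ε ∧ x (t₀ + δ) ∉ P) :
    0 ≤ ⟪v, N⟫ := by
  by_contra! hneg
  obtain ⟨U, hU, hxU, hsub⟩ := hloc
  have hg : HasDerivAt (fun t => ⟪x t - x₀, N⟫) ⟪v, N⟫ t₀ := by
    have h := (hx.sub_const x₀).inner ℝ (hasDerivAt_const t₀ N)
    simpa using h
  have h1 : ∀ᶠ t in nhdsWithin t₀ (Set.Ioi t₀),
      slope (fun t => ⟪x t - x₀, N⟫) t₀ t < 0 :=
    ((hasDerivAt_iff_tendsto_slope.1 hg).mono_left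
      (nhdsWithin_mono _ (fun t ht => ne_of_gt ht))).eventually_lt_const hneg
  have h2 : ∀ᶠ t in nhdsWithin t₀ (Set.Ioi t₀), x t ∈ U :=
    (hx.continuousAt.eventually_mem (hU.mem_nhds (hxt₀ ▸ hxU))).filter_mono
      nhdsWithin_le_nhds
  obtain ⟨u, hu, hmem⟩ := mem_nhdsGT_iff_exists_Ioo_subset.1 (h1.and h2)
  have hu' : t₀ < u := hu
  obtain ⟨δ, hδ, hδu, hnot⟩ := hesc (u - t₀) (by linarith)
  obtain ⟨hs, hUx⟩ := hmem (show t₀ + δ ∈ Set.Ioo t₀ u from ⟨by linarith, by linarith⟩)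
  refine hnot (hsub ⟨hUx, ?_⟩)
  show ⟪x (t₀ + δ) - x₀, N⟫ ≤ 0
  rw [slope_def_field] at hs
  simp only [hxt₀, sub_self, inner_zero_left, sub_zero, add_sub_cancel_left] at hs
  by_contra! hpos
  exact absurd (div_pos hpos hδ) (not_lt.2 hs.le)
end

section
/- Let n ≥ 1 and let F : EuclideanSpace ℝ (Fin n) → Set (EuclideanSpace ℝ (Fin n)) be such that F x is nonempty and bounded for every x, and suppose F is ℓ-Lipschitz with respect to the Hausdorff distance for some ℓ > 0, i.e., hausdorffDist (F x) (F y) ≤ ℓ * ‖x - y‖ for all x, y. Let N be a unit vector (‖N‖ = 1), x₀ a point, and ε > 0. If ⟪u, N⟫ ≤ -ε for every u ∈ F x₀, then for every x with ‖x - x₀‖ ≤ ε / ℓ and every v ∈ F x one has ⟪v, N⟫ ≤ 0. (Paper's Theorem 2.) -/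
open scoped RealInnerProductSpace

theorem stmt_2 (n : ℕ) (hn : 1 ≤ n)
    (F : EuclideanSpace ℝ (Fin n) → Set (EuclideanSpace ℝ (Fin n)))
    (hFne : ∀ x, (F x).Nonempty) (hFbd : ∀ x, Bornology.IsBounded (F x))
    (ℓ : ℝ) (hℓ : 0 < ℓ)
    (hLip : ∀ x y, Metric.hausdorffDist (F x) (F y) ≤ ℓ * ‖x - y‖)
    (N x₀ : EuclideanSpace ℝ (Fin n)) (hN : ‖N‖ = 1)
    (ε : ℝ) (hε : 0 < ε)
    (h : ∀ u ∈ F x₀, ⟪u, N⟫ ≤ -ε) :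
    ∀ x, ‖x - x₀‖ ≤ ε / ℓ → ∀ v ∈ F x, ⟪v, N⟫ ≤ 0 := by
  intro x hx v hv
  apply le_of_forall_pos_le_add
  intro δ hδ
  have h1 : ℓ * ‖x - x₀‖ ≤ ε := by
    rw [le_div_iff₀ hℓ] at hx
    linarith
  have h2 : Metric.hausdorffDist (F x) (F x₀) < ε + δ := by
    linarith [hLip x x₀]
  obtain ⟨u, hu, huv⟩ := Metric.exists_dist_lt_of_hausdorffDist_lt hv h2
    (Metric.hausdorffEDist_ne_top_of_nonempty_of_bounded (hFne x) (hFne x₀) (hFbd x) (hFbd x₀))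
  have h3 : ⟪v - u, N⟫ ≤ ‖v - u‖ * ‖N‖ := real_inner_le_norm _ _
  rw [inner_sub_left, hN, ← dist_eq_norm] at h3
  linarith [h u hu]
end

section
/- Let n ≥ 1 and let v : Fin n → EuclideanSpace ℝ (Fin d) be affinely independent. Let s ∈ ℝ with 0 < s ≤ 1, and for each j define b j = v 0 + s • (v j - v 0). Let a : Fin (n-1) → ℝ satisfy a i ≥ 0 for all i, and set p = v 0 + ∑ i, a i • (b (i.succ) - v 0) (the point with coordinates a in the coordinate system with origin v 0 and basis vectors b j - v 0). Then p ∈ convexHull ℝ (Set.range v) if and only if ∑ i, a i ≤ 1 / s. (Paper's Lemma 1, the coordinate-system membership criterion for the simplex.) -/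
theorem stmt_4 (n d : ℕ) (hn : 1 ≤ n)
    (v : Fin n → EuclideanSpace ℝ (Fin d))
    (hv : AffineIndependent ℝ v)
    (s : ℝ) (hs0 : 0 < s) (hs1 : s ≤ 1)
    (b : Fin n → EuclideanSpace ℝ (Fin d))
    (hb : ∀ j, b j = v ⟨0, hn⟩ + s • (v j - v ⟨0, hn⟩))
    (a : Fin (n - 1) → ℝ) (ha : ∀ i, 0 ≤ a i)
    (p : EuclideanSpace ℝ (Fin d))
    (hp : p = v ⟨0, hn⟩ +
      ∑ i : Fin (n - 1), a i • (b (Fin.cast (Nat.succ_pred_eq_of_pos hn) i.succ) - v ⟨0, hn⟩)) :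
    p ∈ convexHull ℝ (Set.range v) ↔ ∑ i, a i ≤ 1 / s := by
  obtain ⟨m, rfl⟩ : ∃ m, n = m + 1 := ⟨n - 1, by omega⟩
  change Fin m → ℝ at a
  have hp' : p = v 0 + ∑ i : Fin m, a i • (b i.succ - v 0) := hp
  have hb' : ∀ j, b j = v 0 + s • (v j - v 0) := hb
  have ha' : ∀ i : Fin m, 0 ≤ a i := ha
  change p ∈ convexHull ℝ (Set.range v) ↔ ∑ i : Fin m, a i ≤ 1 / s
  clear hp hb ha
  let w : Fin (m + 1) → ℝ := Fin.cons (1 - s * ∑ i : Fin m, a i) (fun i => s * a i)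
  have hw1 : ∑ i, w i = 1 := by
    simp [w, Fin.sum_univ_succ, ← Finset.mul_sum]
  have hwp : ∑ i, w i • v i = p := by
    rw [hp']
    simp only [w, Fin.sum_univ_succ, Fin.cons_zero, Fin.cons_succ, hb', add_sub_cancel_left,
      smul_sub, Finset.sum_sub_distrib, smul_smul, ← Finset.sum_smul, sub_smul, one_smul,
      mul_comm s, Finset.sum_mul]
    abel
  rw [le_div_iff₀ hs0, mul_comm]
  constructor
  · intro h
    rw [convexHull_range_eq_exists_affineCombination] at h
    obtain ⟨t, u, hu0, hu1, hup⟩ := h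
    rw [Finset.affineCombination_eq_linear_combination _ _ _ hu1] at hup
    let u' : Fin (m + 1) → ℝ := fun i => if i ∈ t then u i else 0
    have hu1' : ∑ i, u' i = 1 := by simpa [u'] using hu1
    have hup' : ∑ i, u' i • v i = p := by simpa [u', ite_smul] using hup
    have key := affineIndependent_iff.1 hv Finset.univ (fun i => w i - u' i)
      (by simp [hw1, hu1']) (by simp [sub_smul, hwp, hup']) 0 (Finset.mem_univ _)
    have h0 : 0 ≤ u' 0 := by
      simp only [u']
      split_ifs with h
      · exact hu0 _ h
      · exact le_rfl
    simp only [w, Fin.cons_zero] at key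
    linarith
  · intro h
    rw [← hwp]
    refine (convex_convexHull ℝ _).sum_mem (fun i _ => ?_) hw1
      (fun i _ => subset_convexHull ℝ _ (Set.mem_range_self i))
    refine Fin.cases ?_ (fun j => ?_) i
    · simp only [w, Fin.cons_zero]; linarith
    · simp only [w, Fin.cons_succ]; exact mul_nonneg hs0.le (ha' j)
end

section
/- Let n ≥ 1, let v : Fin n → EuclideanSpace ℝ (Fin n) and Δ = convexHull ℝ (Set.range v). Let r > 0 satisfy ‖v i - v j‖ ≤ r for all i, j, let 0 < s ≤ 1 and ℓ > 0. Let T ⊆ Δ be a set of test points such that every point of Δ is within distance r·s of some point of T (∀ y ∈ Δ, ∃ x ∈ T, ‖y - x‖ ≤ r * s). Let F : EuclideanSpace ℝ (Fin n) → Set (EuclideanSpace ℝ (Fin n)) have nonempty bounded values and satisfy hausdorffDist (F x) (F y) ≤ ℓ * ‖x - y‖ for all x, y, and let N be a unit vector (‖N‖ = 1). If ⟪u, N⟫ ≤ -(r * s * ℓ) for every x ∈ T and every u ∈ F x, then ⟪w, N⟫ ≤ 0 for every y ∈ Δ and every w ∈ F y. (Paper's Theorem 3 / Theorem B.3: satisfaction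 of the discretized boundary condition at the finite lattice of test points implies the simplex is invariant.) -/
open scoped RealInnerProductSpace

theorem stmt_7 (n : ℕ) (hn : 1 ≤ n)
    (v : Fin n → EuclideanSpace ℝ (Fin n))
    (Δ : Set (EuclideanSpace ℝ (Fin n))) (hΔ : Δ = convexHull ℝ (Set.range v))
    (r : ℝ) (hrpos : 0 < r) (hr : ∀ i j, ‖v i - v j‖ ≤ r)
    (s : ℝ) (hs0 : 0 < s) (hs1 : s ≤ 1)
    (ℓ : ℝ) (hℓ : 0 < ℓ)
    (T : Set (EuclideanSpace ℝ (Fin n))) (hT : T ⊆ Δ)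
    (hTdense : ∀ y ∈ Δ, ∃ x ∈ T, ‖y - x‖ ≤ r * s)
    (F : EuclideanSpace ℝ (Fin n) → Set (EuclideanSpace ℝ (Fin n)))
    (hFne : ∀ x, (F x).Nonempty) (hFbd : ∀ x, Bornology.IsBounded (F x))
    (hLip : ∀ x y, Metric.hausdorffDist (F x) (F y) ≤ ℓ * ‖x - y‖)
    (N : EuclideanSpace ℝ (Fin n)) (hN : ‖N‖ = 1)
    (h : ∀ x ∈ T, ∀ u ∈ F x, ⟪u, N⟫ ≤ -(r * s * ℓ)) :
    ∀ y ∈ Δ, ∀ w ∈ F y, ⟪w, N⟫ ≤ 0 := by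
  intro y hy w hw
  obtain ⟨x, hxT, hx⟩ := hTdense y hy
  refine le_of_forall_pos_lt_add fun ε hε => ?_
  have h1 : ℓ * ‖y - x‖ ≤ ℓ * (r * s) := mul_le_mul_of_nonneg_left hx hℓ.le
  have h2 := hLip y x
  have h3 : Metric.hausdorffDist (F y) (F x) < ℓ * (r * s) + ε := by linarith
  obtain ⟨u, hu, hwu⟩ := Metric.exists_dist_lt_of_hausdorffDist_lt hw h3
    (Metric.hausdorffEDist_ne_top_of_nonempty_of_bounded (hFne y) (hFne x) (hFbd y) (hFbd x))
  have h4 := h x hxT u hu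
  have h5 : ⟪w - u, N⟫ ≤ ‖w - u‖ * ‖N‖ := real_inner_le_norm _ _
  rw [inner_sub_left, hN, mul_one, ← dist_eq_norm] at h5
  linarith
end

section
/- Let P be a convex subset of EuclideanSpace ℝ (Fin n), let c lie in the interior of P, and let v and w be extreme points of P. If there exists λ > 0 with w = c + λ • (v - c) (i.e., v and w lie on the same ray emanating from c), then v = w. (Core geometric fact in the proof of the paper's Theorem 4: since no two vertices of the polytope lie on a common ray from an interior point c, the vertex maps H_j, which move each vertex along its own ray R_j(c), are bijective and induce homeomorphisms.) -/
theorem stmt_10 (n : ℕ)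
    (P : Set (EuclideanSpace ℝ (Fin n))) (hP : Convex ℝ P)
    (c : EuclideanSpace ℝ (Fin n)) (hc : c ∈ interior P)
    (v w : EuclideanSpace ℝ (Fin n))
    (hv : v ∈ Set.extremePoints ℝ P) (hw : w ∈ Set.extremePoints ℝ P)
    (hray : ∃ l : ℝ, 0 < l ∧ w = c + l • (v - c)) :
    v = w := by
  obtain ⟨l, hl, h⟩ := hray
  have hcP := interior_subset hc
  rw [mem_extremePoints] at hv hw
  rcases lt_trichotomy l 1 with h1 | h1 | h1
  · refine (hw.2 c hcP v hv.1 ⟨1 - l, l, by linarith, hl, by ring, ?_⟩).2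
    rw [h]; module
  · rw [h, h1]; module
  · have hi : l⁻¹ < 1 := inv_lt_one_of_one_lt₀ h1
    refine (hv.2 c hcP w hw.1 ⟨1 - l⁻¹, l⁻¹, by linarith, by positivity, by ring, ?_⟩).2.symm
    rw [h, smul_add, smul_smul, inv_mul_cancel₀ hl.ne']; module
end

section
/- Let n ≥ 1, let ι be a finite index type, N : ι → EuclideanSpace ℝ (Fin n), b : ι → ℝ, and let P = {y | ∀ i, ⟪y, N i⟫ ≤ b i} be the corresponding polyhedron. Let x : ℝ → EuclideanSpace ℝ (Fin n) and x' : ℝ → EuclideanSpace ℝ (Fin n) be such that x has derivative x' t at every t ≥ t₀, and suppose x t₀ ∈ P. If for every t ≥ t₀ and every i with ⟪x t, N i⟫ = b i one has ⟪x' t, N i⟫ < 0, then x t ∈ P for all t ≥ t₀. (Strict-inequality version of the paper's Corollary 2: if every boundary simplex of the polytope P satisfies the (strict) invariance condition along the trajectory, then P is a forward invariant set, i.e., trajectories starting in P never leave it.) -/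
open scoped RealInnerProductSpace

theorem stmt_12 (n : ℕ) (hn : 1 ≤ n)
    (ι : Type*) [Finite ι]
    (N : ι → EuclideanSpace ℝ (Fin n)) (b : ι → ℝ)
    (P : Set (EuclideanSpace ℝ (Fin n)))
    (hP : P = {y | ∀ i, ⟪y, N i⟫ ≤ b i})
    (x x' : ℝ → EuclideanSpace ℝ (Fin n)) (t₀ : ℝ)
    (hderiv : ∀ t, t₀ ≤ t → HasDerivAt x (x' t) t)
    (hx₀ : x t₀ ∈ P)
    (hbdry : ∀ t, t₀ ≤ t → ∀ i, ⟪x t, N i⟫ = b i → ⟪x' t, N i⟫ < 0) :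
    ∀ t, t₀ ≤ t → x t ∈ P := by
  subst hP
  intro t ht i
  have hd : ∀ s, t₀ ≤ s → HasDerivAt (fun u => ⟪x u, N i⟫) ⟪x' s, N i⟫ s := by
    intro s hs
    simpa using (hderiv s hs).inner ℝ (hasDerivAt_const s (N i))
  exact image_le_of_deriv_right_lt_deriv_boundary' (f := fun u => ⟪x u, N i⟫)
    (f' := fun u => ⟪x' u, N i⟫) (a := t₀) (b := t) (B := fun _ => b i) (B' := fun _ => 0)
    (fun s hs => (hd s hs.1).continuousAt.continuousWithinAt)
    (fun s hs => (hd s hs.1).hasDerivWithinAt) (hx₀ i) continuousOn_const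
    (fun s _ => hasDerivWithinAt_const _ _ _)
    (fun s hs h => hbdry s hs.1 i h) ⟨ht, le_refl t⟩
end

section
/- Let g : ℝ → ℝ be differentiable at every t ≥ t₀, with g t₀ ≤ 0, and suppose that for every t ≥ t₀ with g t = 0 one has deriv g t < 0. Then g t ≤ 0 for all t ≥ t₀. (Scalar invariance lemma: the one-dimensional mechanism by which the strict invariance condition ⟨F(x), N⟩ < 0 at boundary points prevents trajectories from crossing a supporting hyperplane, used to show that a polytope all of whose boundary simplices satisfy the invariance condition is a forward invariant set.) -/
theorem stmt_13 (g : ℝ → ℝ) (t₀ : ℝ)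
    (hdiff : ∀ t, t₀ ≤ t → DifferentiableAt ℝ g t)
    (h₀ : g t₀ ≤ 0)
    (hbdry : ∀ t, t₀ ≤ t → g t = 0 → deriv g t < 0) :
    ∀ t, t₀ ≤ t → g t ≤ 0 := by
  intro t ht
  exact image_le_of_deriv_right_lt_deriv_boundary (f := g) (f' := deriv g) (a := t₀) (b := t)
    (B := fun _ => 0) (B' := fun _ => 0)
    (fun x hx => (hdiff x hx.1).continuousAt.continuousWithinAt)
    (fun x hx => (hdiff x hx.1).hasDerivAt.hasDerivWithinAt)
    h₀ (fun x => hasDerivAt_const x 0)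
    (fun x hx h => hbdry x hx.1 h) ⟨ht, le_refl t⟩
end
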